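/- Let h > 0, k ∈ ℝ, y = (y₁, y₂) ∈ ℝ², ξ₂ ∈ ℝ with 1 + kξ₂ > 0, and τ ∈ ℂ with Im τ > 0. Define ψ : ℝ → ℂ by ψ(s) = h^{−1}(1 + kξ₂)^{−1}((τ − ξ₂²/2)s − s³/6) and W : ℝ → ℂ by W(ξ₁) = −(1 + kξ₂)^{−1} e^{iψ(ξ₁)} ∫_{−∞}^{ξ₁} e^{−iψ(η) − i h^{−1}(y₁η + y₂ξ₂)} dη. Then the integral converges absolutely for every ξ₁ ∈ ℝ, W is differentiable, and W solves (τ − ½ξ₁² − ½ξ₂²) W(ξ₁) + i h (1 + kξ₂) W′(ξ₁) = − i h e^{− i h^{−1}(y₁ξ₁ + y₂ξ₂)} for all ξ₁ ∈ ℝ. -/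

import Mathlib

/-!
Write `c = 1 + kξ₂`. The cubic part of `ψ` is real on the real line, so the integrand
`F(η) = e^{−iψ(η) − ih⁻¹(y₁η + y₂ξ₂)}` has modulus exactly `e^{η Im τ / (hc)}`, which is integrable at
`−∞` because `Im τ > 0`. The fundamental theorem of calculus and the product rule then give
`W′ = iψ′W − c⁻¹e^{iψ}F`; since `hcψ′(s) = τ − ξ₂²/2 − s²/2`, multiplying by `ihc` cancels the
zeroth-order term, and `e^{iψ}F` is the plane wave on the right-hand side.
-/

open MeasureTheory Complex

theorem hasDerivAt_integral_Iic {f : ℝ → ℂ} (hf : Continuous f)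
    (hi : ∀ x : ℝ, IntegrableOn f (Set.Iic x)) (x : ℝ) :
    HasDerivAt (fun u : ℝ => ∫ t in Set.Iic u, f t) (f x) x := by
  have h1 : HasDerivAt (fun u : ℝ => (∫ t in Set.Iic x, f t) + ∫ t in x..u, f t) (f x) x :=
    (intervalIntegral.integral_hasDerivAt_right (hf.intervalIntegrable _ _)
      (hf.stronglyMeasurableAtFilter _ _) hf.continuousAt).const_add _
  convert h1 using 2 with u
  rw [← intervalIntegral.integral_Iic_sub_Iic (hi x) (hi u)]
  ring

/-- The resolvent-side computation (2.32)–(2.33) for the generalized toy-model operator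
`Ā_{k,h} = ½h²D₁² + ½h²(D₂ − kx₁)² − x₁ − ½k²x₁²` in `d = 2`: with
`ψ(s) = h⁻¹(1 + kξ₂)⁻¹((τ − ξ₂²/2)s − s³/6)` and
`W(ξ₁) = −(1 + kξ₂)⁻¹ e^{iψ(ξ₁)} ∫_{−∞}^{ξ₁} e^{−iψ(η) − ih⁻¹(y₁η + y₂ξ₂)} dη`
(for `Im τ > 0` and `1 + kξ₂ > 0`), the integral converges absolutely, `W` is
differentiable, and `W` solves
`(τ − ½ξ₁² − ½ξ₂²)W(ξ₁) + ih(1 + kξ₂)W′(ξ₁) = −ih e^{−ih⁻¹(y₁ξ₁ + y₂ξ₂)}`. -/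
theorem generalized_toy_model_transport_equation (h k y₁ y₂ ξ₂ : ℝ) (hh : 0 < h)
    (hk : 0 < 1 + k * ξ₂) (τ : ℂ) (hτ : 0 < τ.im)
    (ψ : ℝ → ℂ)
    (hψ : ψ = fun s : ℝ => (h⁻¹ : ℂ) * ((1 + k * ξ₂ : ℝ) : ℂ)⁻¹ *
      ((τ - ((ξ₂ ^ 2 / 2 : ℝ) : ℂ)) * (s : ℂ) - (s : ℂ) ^ 3 / 6))
    (W : ℝ → ℂ)
    (hW : W = fun ξ₁ : ℝ => -(((1 + k * ξ₂ : ℝ) : ℂ))⁻¹ * Complex.exp (Complex.I * ψ ξ₁) *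
      ∫ η in Set.Iic ξ₁,
        Complex.exp (-(Complex.I * ψ η) - Complex.I * ((h⁻¹ * (y₁ * η + y₂ * ξ₂) : ℝ) : ℂ))) :
    (∀ ξ₁ : ℝ, IntegrableOn
        (fun η : ℝ =>
          Complex.exp (-(Complex.I * ψ η) - Complex.I * ((h⁻¹ * (y₁ * η + y₂ * ξ₂) : ℝ) : ℂ)))
        (Set.Iic ξ₁)) ∧
    (∀ ξ₁ : ℝ, DifferentiableAt ℝ W ξ₁) ∧
    (∀ ξ₁ : ℝ,
      (τ - (ξ₁ : ℂ) ^ 2 / 2 - ((ξ₂ ^ 2 / 2 : ℝ) : ℂ)) * W ξ₁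
          + Complex.I * (h : ℂ) * ((1 + k * ξ₂ : ℝ) : ℂ) * deriv W ξ₁
        = -Complex.I * (h : ℂ) *
            Complex.exp (-Complex.I * ((h⁻¹ * (y₁ * ξ₁ + y₂ * ξ₂) : ℝ) : ℂ))) := by
  have hh0 : (h : ℂ) ≠ 0 := by exact_mod_cast hh.ne'
  have hc0 : ((1 + k * ξ₂ : ℝ) : ℂ) ≠ 0 := by exact_mod_cast hk.ne'
  generalize 1 + k * ξ₂ = c at *
  set F : ℝ → ℂ := fun η : ℝ =>
    Complex.exp (-(Complex.I * ψ η) - Complex.I * ((h⁻¹ * (y₁ * η + y₂ * ξ₂) : ℝ) : ℂ)) with hF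
  have hψc : Continuous ψ := by rw [hψ]; fun_prop
  have hFc : Continuous F := by fun_prop
  have hψim : ∀ η, (ψ η).im = h⁻¹ * c⁻¹ * τ.im * η := by
    intro η
    -- Splitting off the real part leaves `τη` as the only contribution to the imaginary part.
    have e : ψ η = ((h⁻¹ * c⁻¹ : ℝ) : ℂ) *
        (τ * (η : ℂ) - ((ξ₂ ^ 2 / 2 * η + η ^ 3 / 6 : ℝ) : ℂ)) := by
      rw [hψ]; push_cast; ring
    rw [e, Complex.im_ofReal_mul, Complex.sub_im, Complex.ofReal_im, Complex.im_mul_ofReal]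
    ring
  have hnorm : ∀ η, ‖F η‖ = Real.exp (h⁻¹ * c⁻¹ * τ.im * η) := by
    intro η
    rw [hF, Complex.norm_exp, ← hψim]
    simp
  have hint : ∀ x : ℝ, IntegrableOn F (Set.Iic x) := by
    intro x
    have hpos : 0 < h⁻¹ * c⁻¹ * τ.im := by positivity
    refine (integrableOn_exp_mul_Iic hpos x).mono' hFc.aestronglyMeasurable ?_
    exact Filter.Eventually.of_forall fun η => (hnorm η).le
  have hψd : ∀ x : ℝ, HasDerivAt ψ
      ((h : ℂ)⁻¹ * (c : ℂ)⁻¹ * (τ - ((ξ₂ ^ 2 / 2 : ℝ) : ℂ) - (x : ℂ) ^ 2 / 2)) x := by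
    intro x
    have h1 : HasDerivAt (fun s : ℝ => (s : ℂ)) 1 x := Complex.ofRealCLM.hasDerivAt
    rw [hψ]
    refine (((h1.const_mul (τ - ((ξ₂ ^ 2 / 2 : ℝ) : ℂ))).sub
      ((h1.pow 3).div_const 6)).const_mul ((h : ℂ)⁻¹ * (c : ℂ)⁻¹)).congr_deriv ?_
    push_cast
    ring
  have hWd : ∀ x : ℝ, HasDerivAt W
      (Complex.I * ((h : ℂ)⁻¹ * (c : ℂ)⁻¹ * (τ - ((ξ₂ ^ 2 / 2 : ℝ) : ℂ) - (x : ℂ) ^ 2 / 2)) * W x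
        - (c : ℂ)⁻¹ * Complex.exp (-Complex.I * ((h⁻¹ * (y₁ * x + y₂ * ξ₂) : ℝ) : ℂ))) x := by
    intro x
    have hE : Complex.exp (-Complex.I * ((h⁻¹ * (y₁ * x + y₂ * ξ₂) : ℝ) : ℂ))
        = Complex.exp (Complex.I * ψ x) * F x := by
      rw [hF, ← Complex.exp_add]
      congr 1
      ring
    rw [hE, hW]
    refine (((((hψd x).const_mul Complex.I).cexp).const_mul (-(c : ℂ)⁻¹)).mul
      (hasDerivAt_integral_Iic hFc hint x)).congr_deriv ?_
    beta_reduce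
    ring
  refine ⟨hint, fun x => (hWd x).differentiableAt, fun x => ?_⟩
  rw [(hWd x).deriv]
  field_simp
  linear_combination (2 * (τ - ((ξ₂ ^ 2 / 2 : ℝ) : ℂ) - (x : ℂ) ^ 2 / 2) * W x) * Complex.I_sq
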